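/- arXiv:1507.04471 — 2 statements merged into one kernel-verified Lean document; each statement's English description precedes it below -/
import Mathlib

section
/- Let Z be a simple d-cycle on [n] over F_2. Then there exists a simple rational d-cycle W on [n] such that Z is contained in the support of W. -/
open Finset symmDiff

/-- The vertex set `[n] = {1, …, n}`. -/
def rng (n : ℕ) : Finset ℕ := Finset.Icc 1 n

/-- The set of `d`-simplices (i.e. `(d+1)`-element subsets) on the vertex set `V`. -/
def simplices (V : Finset ℕ) (d : ℕ) : Finset (Finset ℕ) :=
  V.powerset.filter fun σ => σ.card = d + 1

/-- The mod-2 boundary of a set `X` of simplices: the set of faces `τ` of codimension one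
(`|τ| + 1 = |σ|`) contained in an odd number of members of `X`. -/
def bd (X : Finset (Finset ℕ)) : Finset (Finset ℕ) :=
  (X.biUnion fun σ => σ.powerset).filter
    fun τ => Odd (X.filter fun σ => τ ⊆ σ ∧ τ.card + 1 = σ.card).card

/-- A set of simplices is acyclic (a forest) over `F_2` if no nonempty subset has
empty boundary. -/
def IsAcyclic (F : Finset (Finset ℕ)) : Prop :=
  ∀ Y ⊆ F, Y ≠ ∅ → bd Y ≠ ∅

/-- A `d`-hypertree on `V`: a maximal acyclic set of `d`-simplices on `V`. -/
def IsHypertreeOn (V : Finset ℕ) (d : ℕ) (T : Finset (Finset ℕ)) : Prop :=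
  T ⊆ simplices V d ∧ IsAcyclic T ∧
    ∀ G, T ⊆ G → G ⊆ simplices V d → IsAcyclic G → G = T

/-- A simple cycle over `F_2`: a nonempty set with empty boundary, no nonempty proper
subset of which has empty boundary. -/
def IsSimpleCycle (Z : Finset (Finset ℕ)) : Prop :=
  Z ≠ ∅ ∧ bd Z = ∅ ∧ ∀ Y ⊂ Z, Y ≠ ∅ → bd Y ≠ ∅

/-- Collapsibility: `X` can be reduced to `∅` by repeatedly removing a simplex `σ ∈ X`
containing a codimension-one face contained in no other current member of `X`. -/
inductive Collapsible : Finset (Finset ℕ) → Prop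
  | empty : Collapsible ∅
  | step (X : Finset (Finset ℕ)) (σ τ : Finset ℕ) (hσ : σ ∈ X) (hτ : τ ⊆ σ)
      (hcard : τ.card + 1 = σ.card) (huniq : ∀ σ' ∈ X, τ ⊆ σ' → σ' = σ)
      (h : Collapsible (X.erase σ)) : Collapsible X

/-- The cone over `X` with apex `v`. -/
def cone (v : ℕ) (X : Finset (Finset ℕ)) : Finset (Finset ℕ) :=
  X.image (insert v)

/-- The link of the vertex `v` in `X`. -/
def link (v : ℕ) (X : Finset (Finset ℕ)) : Finset (Finset ℕ) :=
  (X.filter fun σ => v ∈ σ).image fun σ => σ.erase v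

/-- `fill Z T`: the subset `F ⊆ T` with `∂F = Z` (when it exists; it is unique when `T`
is a hypertree and `Z` a cycle). -/
noncomputable def fill (Z T : Finset (Finset ℕ)) : Finset (Finset ℕ) :=
  if h : ∃ F, F ⊆ T ∧ bd F = Z then h.choose else ∅

/-- The average filling-volume `μ(T)` of a `d`-hypertree `T` on `[n]`. -/
noncomputable def fillVolAvg (n d : ℕ) (T : Finset (Finset ℕ)) : ℝ :=
  (∑ σ ∈ simplices (rng n) d, ((fill (bd {σ}) T).card : ℝ)) / (n.choose (d + 1) : ℝ)

open Classical in
/-- The cut of `τ` in `T`: the set of `d`-simplices `σ` on `[n]` such that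
`T ⊕ {τ} ⊕ {σ}` is a `d`-hypertree on `[n]`. -/
noncomputable def cut (n d : ℕ) (τ : Finset ℕ) (T : Finset (Finset ℕ)) : Finset (Finset ℕ) :=
  (simplices (rng n) d).filter fun σ => IsHypertreeOn (rng n) d ((T ∆ {τ}) ∆ {σ})

/-- The rational boundary operator: for a `d`-chain `C` on `[n]` (given as a coefficient
function), `rbd n d C τ` is the coefficient of `τ` in `∂C`, where
`∂σ = Σ_{i} (-1)^i (σ ∖ {v_i})` for `σ = {v_0 < … < v_d}`. -/
def rbd (n d : ℕ) (C : Finset ℕ → ℚ) : Finset ℕ → ℚ :=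
  fun τ => ∑ σ ∈ simplices (rng n) d, ∑ v ∈ σ,
    if σ.erase v = τ then (-1 : ℚ) ^ (σ.filter (· < v)).card * C σ else 0

/-- A rational `d`-chain on `[n]`: supported on `d`-simplices on `[n]`. -/
def IsQChain (n d : ℕ) (C : Finset ℕ → ℚ) : Prop :=
  ∀ σ, C σ ≠ 0 → σ ∈ simplices (rng n) d

/-- A rational `d`-cycle on `[n]`. -/
def IsQCycle (n d : ℕ) (C : Finset ℕ → ℚ) : Prop :=
  IsQChain n d C ∧ rbd n d C = 0

/-- A simple rational `d`-cycle: nonzero, and no nonzero rational `d`-cycle has support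
properly contained in its support. -/
def IsSimpleQCycle (n d : ℕ) (C : Finset ℕ → ℚ) : Prop :=
  IsQCycle n d C ∧ C ≠ 0 ∧
    ∀ W, IsQCycle n d W → Function.support W ⊂ Function.support C → W = 0

/-!
For every field `K`, the cone over chains with apex `a` is a contracting homotopy, so a cycle is
determined by its coefficients on the simplices avoiding `a`, and these are arbitrary. Hence the
spaces of cycles over `𝔽_p` and over `ℚ` have the same dimension `r`. Moreover, dividing a nonzero
rational cycle by its `p`-adically largest coefficient and reducing modulo `p` yields a nonzero
cycle over `𝔽_p` whose support is contained in the support of the rational one.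

Let `z` be a simple cycle over `𝔽_p`. The coordinates at which `z` vanishes span a space of
functionals of dimension less than `r`, and fewer than `r` of them, say those in `s`, already span
it. Some nonzero rational cycle vanishes on `s`; shrinking its support, we may take it to be a
simple cycle `w`. Its reduction `u` vanishes on `s`, hence wherever `z` does, so `supp u = supp z`
as `z` is simple, and `supp z = supp u ⊆ supp w`.
-/

section Boundary

variable {α : Type*} [LinearOrder α]

/-- The sign with which `τ` occurs in the boundary of `insert v τ`, for `v ∉ τ`. -/
def faceSign (v : α) (τ : Finset α) : ℤ :=
  (-1) ^ #{x ∈ τ | x < v}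

lemma faceSign_mul_self (v : α) (τ : Finset α) : faceSign v τ * faceSign v τ = 1 := by
  rw [faceSign, ← pow_add, Even.neg_one_pow ⟨_, rfl⟩]

lemma faceSign_insert {u : α} {τ : Finset α} (hu : u ∉ τ) (v : α) :
    faceSign v (insert u τ) = (if u < v then -1 else 1) * faceSign v τ := by
  unfold faceSign
  rw [filter_insert]
  split_ifs
  · rw [card_insert_of_notMem (by simp [hu]), pow_succ']
  · rw [one_mul]

lemma faceSign_insert_mul_faceSign {u v : α} {τ : Finset α} (huv : u ≠ v) (hu : u ∉ τ)
    (hv : v ∉ τ) :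
    faceSign u (insert v τ) * faceSign v τ = -(faceSign v (insert u τ) * faceSign u τ) := by
  rw [faceSign_insert hu, faceSign_insert hv]
  rcases huv.lt_or_gt with h | h <;> simp [h, h.not_gt, mul_comm]

lemma faceSign_insert_mul_faceSign_insert {u v : α} {τ : Finset α} (huv : u ≠ v) (hu : u ∉ τ)
    (hv : v ∉ τ) :
    faceSign u (insert v τ) * faceSign v (insert u τ) = -(faceSign u τ * faceSign v τ) := by
  rw [faceSign_insert hu, faceSign_insert hv]
  rcases huv.lt_or_gt with h | h <;> simp [h, h.not_gt]

/-- The simplicial boundary of chains on the vertex set `V`, a chain being a coefficient function on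
finite sets of vertices. The coefficient of `τ` in `∂C` is computed from the cofaces of `τ`. -/
def boundary (R : Type*) [CommRing R] (V : Finset α) :
    (Finset α → R) →ₗ[R] (Finset α → R) where
  toFun C τ := ∑ v ∈ V \ τ, faceSign v τ • C (insert v τ)
  map_add' C D := by
    ext τ
    simp only [Pi.add_apply, smul_add, sum_add_distrib]
  map_smul' r C := by
    ext τ
    simp only [Pi.smul_apply, smul_sum, RingHom.id_apply, smul_comm r]

variable {R S : Type*} [CommRing R] [CommRing S] {V : Finset α} {a : α}

lemma boundary_apply (C : Finset α → R) (τ : Finset α) :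
    boundary R V C τ = ∑ v ∈ V \ τ, faceSign v τ • C (insert v τ) :=
  rfl

lemma boundary_comp_ringHom (f : R →+* S) (C : Finset α → R) :
    boundary S V (f ∘ C) = f ∘ boundary R V C := by
  ext τ
  simp only [boundary_apply, Function.comp_apply, map_sum, map_zsmul]

theorem boundary_boundary (C : Finset α → R) : boundary R V (boundary R V C) = 0 := by
  ext τ
  simp only [boundary_apply, smul_sum, smul_smul, sum_sigma', Pi.zero_apply]
  -- The terms for `(v, u)` and `(u, v)` cancel.
  refine sum_involution (fun p _ ↦ ⟨p.2, p.1⟩) ?_ ?_ ?_ (fun _ _ ↦ rfl)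
  · rintro ⟨v, u⟩ hp
    simp only [mem_sigma, mem_sdiff, mem_insert, not_or] at hp
    obtain ⟨⟨-, hv⟩, -, huv, hu⟩ := hp
    rw [mul_comm, faceSign_insert_mul_faceSign huv hu hv, Finset.insert_comm, neg_smul, mul_comm,
      neg_add_cancel]
  · rintro ⟨v, u⟩ hp -
    simp only [mem_sigma, mem_sdiff, mem_insert, not_or] at hp
    grind
  · rintro ⟨v, u⟩ hp
    simp only [mem_sigma, mem_sdiff, mem_insert, not_or] at hp ⊢
    grind

/-- The cone with apex `a` over a chain, with the signs that make it a contracting homotopy;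
simplices of the chain that contain `a` contribute nothing. -/
def coneChain (R : Type*) [CommRing R] (a : α) : (Finset α → R) →ₗ[R] (Finset α → R) where
  toFun C σ := if a ∈ σ then faceSign a (σ.erase a) • C (σ.erase a) else 0
  map_add' C D := by
    ext σ
    by_cases h : a ∈ σ <;> simp [h]
  map_smul' r C := by
    ext σ
    by_cases h : a ∈ σ <;> simp [h, mul_left_comm]

lemma coneChain_apply_insert {τ : Finset α} (ha : a ∉ τ) (C : Finset α → R) :
    coneChain R a C (insert a τ) = faceSign a τ • C τ := by
  change (if a ∈ insert a τ then _ else _) = _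
  rw [if_pos (mem_insert_self a τ), erase_insert ha]

lemma coneChain_apply_of_notMem {σ : Finset α} (ha : a ∉ σ) (C : Finset α → R) :
    coneChain R a C σ = 0 :=
  if_neg ha

theorem boundary_coneChain_add_coneChain_boundary (ha : a ∈ V) (C : Finset α → R) :
    boundary R V (coneChain R a C) + coneChain R a (boundary R V C) = C := by
  ext σ
  rw [Pi.add_apply, boundary_apply]
  by_cases haσ : a ∈ σ
  · obtain ⟨ρ, haρ, rfl⟩ : ∃ ρ, a ∉ ρ ∧ insert a ρ = σ :=
      ⟨σ.erase a, notMem_erase a σ, insert_erase haσ⟩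
    have hV : V \ ρ = insert a (V \ insert a ρ) := by grind
    have hcancel : ∀ v ∈ V \ insert a ρ,
        faceSign v (insert a ρ) • coneChain R a C (insert v (insert a ρ)) =
          -(faceSign a ρ • faceSign v ρ • C (insert v ρ)) := by
      intro v hv
      obtain ⟨hva, hvρ⟩ : v ≠ a ∧ v ∉ ρ := by simpa using (mem_sdiff.1 hv).2
      rw [Finset.insert_comm, coneChain_apply_insert (by simp [haρ, hva.symm]), smul_smul,
        smul_smul, ← neg_smul, faceSign_insert_mul_faceSign_insert hva hvρ haρ, mul_comm]
    rw [sum_congr rfl hcancel, coneChain_apply_insert haρ, boundary_apply, hV,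
      sum_insert (by simp), smul_add, smul_smul, faceSign_mul_self, one_smul, smul_sum,
      sum_neg_distrib]
    abel
  · rw [sum_eq_single_of_mem a (by simp [ha, haσ]), coneChain_apply_insert haσ, smul_smul,
      faceSign_mul_self, one_smul, coneChain_apply_of_notMem haσ, add_zero]
    intro v _ hva
    rw [coneChain_apply_of_notMem (by simp [haσ, hva.symm]), smul_zero]

end Boundary

section ElementaryVectors

variable {ι K L : Type*} [Field K] [Field L]

/-- An elementary vector of a subspace `U` of `ι → K`: a nonzero vector of `U` whose support is
minimal among the nonzero vectors of `U`. The supports of the elementary vectors of `U` are the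
circuits of the matroid of `U`; simple cycles are the elementary vectors of the space of cycles. -/
def IsElementary (U : Submodule K (ι → K)) (z : ι → K) : Prop :=
  z ∈ U ∧ z ≠ 0 ∧ ∀ u ∈ U, u.support ⊂ z.support → u = 0

lemma exists_isElementary_support_subset {U : Submodule K (ι → K)} [FiniteDimensional K U]
    {u : ι → K} (hu : u ∈ U) (hu0 : u ≠ 0) :
    ∃ w, IsElementary U w ∧ w.support ⊆ u.support := by
  -- Supports may be infinite: minimise the subspace of vectors supported in them instead.
  let supportedOn (w : ι → K) : Submodule K U :=
    (Submodule.pi w.supportᶜ fun _ ↦ ⊥).comap U.subtype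
  have mem_supportedOn {w : ι → K} {v : U} :
      v ∈ supportedOn w ↔ (v : ι → K).support ⊆ w.support := by
    simp [supportedOn, Submodule.mem_pi, Set.subset_def, not_imp_not]
  obtain ⟨w, ⟨hwU, hw0, hwu⟩, hmin⟩ := exists_minimalFor_of_wellFoundedLT
    (fun w ↦ w ∈ U ∧ w ≠ 0 ∧ w.support ⊆ u.support) supportedOn ⟨u, hu, hu0, subset_rfl⟩
  refine ⟨w, ⟨hwU, hw0, fun v hvU hvw ↦ ?_⟩, hwu⟩
  by_contra hv0
  have hle : supportedOn w ≤ supportedOn v :=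
    hmin ⟨hvU, hv0, hvw.subset.trans hwu⟩ fun x hx ↦
      mem_supportedOn.2 ((mem_supportedOn.1 hx).trans hvw.subset)
  exact hvw.not_subset (mem_supportedOn.1 (hle (x := ⟨w, hwU⟩) (mem_supportedOn.2 subset_rfl)))

lemma exists_card_lt_finrank_forall_eq_zero {M : Type*} [AddCommGroup M] [Module K M]
    [FiniteDimensional K M] (f : ι → Module.Dual K M) {x : M} (hx : x ≠ 0) :
    ∃ s : Finset ι, #s < Module.finrank K M ∧
      ∀ y, (∀ i ∈ s, f i y = 0) → ∀ i, f i x = 0 → f i y = 0 := by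
  classical
  let W : Submodule K (Module.Dual K M) :=
    Submodule.span K (Set.range fun i : {i // f i x = 0} ↦ f i)
  have hWx : W ≤ LinearMap.ker (Module.Dual.eval K M x) :=
    Submodule.span_le.2 (Set.range_subset_iff.2 fun i ↦ i.2)
  have hWtop : W ≠ ⊤ := fun h ↦ hx <|
    (Module.forall_dual_apply_eq_zero_iff K x).1 fun φ ↦ hWx (h ▸ Submodule.mem_top)
  -- `s` indexes a basis of `W`.
  obtain ⟨κ, a, -, hspan, hli⟩ := exists_linearIndependent' K fun i : {i // f i x = 0} ↦ f i
  have := hli.finite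
  have := Fintype.ofFinite κ
  refine ⟨univ.image fun k ↦ (a k : ι), ?_, fun y hy i hi ↦ ?_⟩
  · calc #(univ.image fun k ↦ (a k : ι)) ≤ Fintype.card κ := card_image_le
      _ = Module.finrank K W := by rw [← finrank_span_eq_card hli, hspan]
      _ < Module.finrank K (Module.Dual K M) := Submodule.finrank_lt hWtop
      _ = Module.finrank K M := Subspace.dual_finrank_eq
  · have hWy : W ≤ LinearMap.ker (Module.Dual.eval K M y) := hspan.ge.trans <|
      Submodule.span_le.2 (Set.range_subset_iff.2 fun k ↦ hy _ (mem_image_of_mem _ (mem_univ k)))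
    exact hWy (Submodule.subset_span ⟨⟨i, hi⟩, rfl⟩)

lemma exists_ne_zero_of_card_lt_finrank {M : Type*} [AddCommGroup M] [Module K M]
    (f : ι → Module.Dual K M) {s : Finset ι} (hs : #s < Module.finrank K M) :
    ∃ x ≠ 0, ∀ i ∈ s, f i x = 0 := by
  have := Module.finite_of_finrank_pos (Nat.zero_lt_of_lt hs)
  obtain ⟨x, hx, hx0⟩ := Submodule.exists_mem_ne_zero_of_ne_bot
    (LinearMap.ker_ne_bot_of_finrank_lt (f := LinearMap.pi fun i : s ↦ f i) (by simpa using hs))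
  exact ⟨x, hx0, fun i hi ↦ congrFun hx ⟨i, hi⟩⟩

theorem IsElementary.exists_support_subset {U : Submodule K (ι → K)}
    {V : Submodule L (ι → L)} [FiniteDimensional K U] [FiniteDimensional L V]
    (hrank : Module.finrank K U ≤ Module.finrank L V)
    (hspec : ∀ v ∈ V, v ≠ 0 → ∃ u ∈ U, u ≠ 0 ∧ u.support ⊆ v.support)
    {z : ι → K} (hz : IsElementary U z) :
    ∃ w, IsElementary V w ∧ z.support ⊆ w.support := by
  obtain ⟨hzU, hz0, hzmin⟩ := hz
  obtain ⟨s, hcard, hs⟩ := exists_card_lt_finrank_forall_eq_zero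
    (fun i ↦ LinearMap.proj i ∘ₗ U.subtype) (x := ⟨z, hzU⟩) (by simpa using hz0)
  obtain ⟨⟨v, hvV⟩, hv0, hvs⟩ := exists_ne_zero_of_card_lt_finrank
    (fun i ↦ LinearMap.proj i ∘ₗ V.subtype) (hcard.trans_le hrank)
  obtain ⟨w, hw, hwv⟩ := exists_isElementary_support_subset hvV (by simpa using hv0)
  obtain ⟨u, huU, hu0, huw⟩ := hspec w hw.1 hw.2.1
  have hus : ∀ i ∈ s, u i = 0 := fun i hi ↦
    Function.notMem_support.1 fun h ↦ hwv (huw h) (hvs i hi)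
  have huz : u.support ⊆ z.support := fun i hi hzi ↦ hi (hs ⟨u, huU⟩ hus i hzi)
  have hzu : z.support ⊆ u.support := by
    by_contra h
    exact hu0 (hzmin u huU ⟨huz, h⟩)
  exact ⟨w, hw, hzu.trans huw⟩

end ElementaryVectors

section Cycles

variable {α : Type*} {R S : Type*} [CommRing R] [CommRing S] {V : Finset α} {a : α} {k : ℕ}
  {C : Finset α → R}

/-- The chains supported on the `k`-element subsets of `V`, i.e. on the `(k - 1)`-simplices. -/
def chains (R : Type*) [CommRing R] (V : Finset α) (k : ℕ) : Submodule R (Finset α → R) :=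
  Submodule.pi {σ | σ ∉ V.powersetCard k} fun _ ↦ ⊥

lemma mem_chains : C ∈ chains R V k ↔ ∀ σ ∉ V.powersetCard k, C σ = 0 := by
  simp only [chains, Submodule.mem_pi, Set.mem_ofPred_eq, Submodule.mem_bot]

variable [LinearOrder α]

/-- The cycles supported on the `k`-element subsets of `V`, i.e. on the `(k - 1)`-simplices. -/
def cycles (R : Type*) [CommRing R] (V : Finset α) (k : ℕ) : Submodule R (Finset α → R) :=
  chains R V k ⊓ LinearMap.ker (boundary R V)

lemma mem_cycles : C ∈ cycles R V k ↔ C ∈ chains R V k ∧ boundary R V C = 0 :=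
  Iff.rfl

lemma comp_ringHom_mem_cycles (f : R →+* S) (hC : C ∈ cycles R V k) : f ∘ C ∈ cycles S V k := by
  obtain ⟨hchain, hbd⟩ := mem_cycles.1 hC
  refine mem_cycles.2 ⟨mem_chains.2 fun σ hσ ↦ ?_, ?_⟩
  · rw [Function.comp_apply, mem_chains.1 hchain σ hσ, map_zero]
  · rw [boundary_comp_ringHom, hbd]
    exact funext fun _ ↦ map_zero f

lemma mem_cycles_of_comp_ringHom_mem_cycles {f : R →+* S} (hf : Function.Injective f)
    (hC : f ∘ C ∈ cycles S V k) : C ∈ cycles R V k := by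
  obtain ⟨hchain, hbd⟩ := mem_cycles.1 hC
  rw [boundary_comp_ringHom] at hbd
  exact mem_cycles.2 ⟨mem_chains.2 fun σ hσ ↦ (map_eq_zero_iff f hf).1 (mem_chains.1 hchain σ hσ),
    funext fun τ ↦ (map_eq_zero_iff f hf).1 (congrFun hbd τ)⟩

lemma eq_zero_of_boundary_eq_zero (ha : a ∈ V) (hbd : boundary R V C = 0)
    (hC : ∀ σ, a ∉ σ → C σ = 0) : C = 0 := by
  have hcone : coneChain R a C = 0 := by
    ext σ
    by_cases haσ : a ∈ σ
    · rw [← insert_erase haσ, coneChain_apply_insert (notMem_erase a σ),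
        hC _ (notMem_erase a σ), smul_zero, Pi.zero_apply]
    · exact coneChain_apply_of_notMem haσ C
  rw [← boundary_coneChain_add_coneChain_boundary ha C, hbd, hcone, map_zero, map_zero, add_zero]

lemma coneChain_boundary_mem_chains (ha : a ∈ V) (hC : C ∈ chains R V k) :
    coneChain R a (boundary R V C) ∈ chains R V k := by
  refine mem_chains.2 fun σ hσ ↦ ?_
  by_cases haσ : a ∈ σ
  · rw [← insert_erase haσ, coneChain_apply_insert (notMem_erase a σ), boundary_apply,
      sum_eq_zero, smul_zero]
    intro v hv
    rw [mem_chains.1 hC, smul_zero]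
    contrapose! hσ
    rw [mem_powersetCard] at hσ ⊢
    have hv' := (mem_sdiff.1 hv).2
    rw [card_insert_of_notMem hv', card_erase_add_one haσ] at hσ
    refine ⟨?_, hσ.2⟩
    rw [← insert_erase haσ]
    exact insert_subset ha ((subset_insert _ _).trans hσ.1)
  · exact coneChain_apply_of_notMem haσ _

lemma sub_coneChain_boundary_mem_cycles (ha : a ∈ V) (hC : C ∈ chains R V k) :
    C - coneChain R a (boundary R V C) ∈ cycles R V k := by
  refine mem_cycles.2 ⟨sub_mem hC (coneChain_boundary_mem_chains ha hC), ?_⟩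
  have hhomotopy := boundary_coneChain_add_coneChain_boundary ha (boundary R V C)
  rw [boundary_boundary, map_zero, add_zero] at hhomotopy
  rw [map_sub, hhomotopy, sub_self]

lemma restrict_cycles_bijective (ha : a ∈ V) :
    Function.Bijective (LinearMap.funLeft R R ((↑) : (V.erase a).powersetCard k → Finset α) ∘ₗ
      (cycles R V k).subtype) := by
  refine ⟨(injective_iff_map_eq_zero _).2 fun ⟨C, hC⟩ h ↦ ?_, fun f ↦ ?_⟩
  · obtain ⟨hchain, hbd⟩ := mem_cycles.1 hC
    refine Subtype.ext (eq_zero_of_boundary_eq_zero ha hbd fun σ haσ ↦ ?_)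
    by_cases hσ : σ ∈ (V.erase a).powersetCard k
    · exact congrFun h ⟨σ, hσ⟩
    · refine mem_chains.1 hchain σ fun hσV ↦ hσ ?_
      rw [mem_powersetCard] at hσV ⊢
      exact ⟨subset_erase.2 ⟨hσV.1, haσ⟩, hσV.2⟩
  · let C (σ : Finset α) : R := if h : σ ∈ (V.erase a).powersetCard k then f ⟨σ, h⟩ else 0
    have hC : C ∈ chains R V k := mem_chains.2 fun σ hσ ↦
      dif_neg fun h ↦ hσ (powersetCard_mono (erase_subset a V) h)
    refine ⟨⟨_, sub_coneChain_boundary_mem_cycles ha hC⟩, funext fun σ ↦ ?_⟩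
    have haσ : a ∉ (σ : Finset α) := (subset_erase.1 (mem_powersetCard.1 σ.2).1).2
    change C σ - coneChain R a (boundary R V C) σ = f σ
    rw [coneChain_apply_of_notMem haσ, sub_zero]
    exact dif_pos σ.2

theorem finrank_cycles (K : Type*) [Field K] (hV : V.Nonempty) (k : ℕ) :
    Module.finrank K (cycles K V k) = (#V - 1).choose k := by
  obtain ⟨a, ha⟩ := hV
  rw [(LinearEquiv.ofBijective _ (restrict_cycles_bijective (k := k) ha)).finrank_eq,
    Module.finrank_fintype_fun_eq_card, Fintype.card_coe, card_powersetCard, card_erase_of_mem ha]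

instance (K : Type*) [Field K] (V : Finset α) (k : ℕ) : FiniteDimensional K (cycles K V k) := by
  refine FiniteDimensional.of_injective
    (LinearMap.funLeft K K ((↑) : V.powersetCard k → Finset α) ∘ₗ (cycles K V k).subtype)
    ((injective_iff_map_eq_zero _).2 fun ⟨C, hC⟩ h ↦ Subtype.ext (funext fun σ ↦ ?_))
  by_cases hσ : σ ∈ V.powersetCard k
  · exact congrFun h ⟨σ, hσ⟩
  · exact mem_chains.1 (mem_cycles.1 hC).1 σ hσ

end Cycles

section Reduction

variable (p : ℕ) [Fact p.Prime]

lemma exists_padicInt_eq_div {ι : Type*} {v : ι → ℚ} (hv : v ≠ 0)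
    (hfin : v.support.Finite) :
    ∃ i, v i ≠ 0 ∧ ∃ w : ι → ℤ_[p], ∀ j, (w j : ℚ_[p]) = (v j / v i : ℚ) := by
  obtain ⟨i, hi, hmax⟩ := hfin.toFinset.exists_max_image (fun j ↦ ‖(v j : ℚ_[p])‖)
    (by simpa using hv)
  have hvi : v i ≠ 0 := hfin.mem_toFinset.1 hi
  refine ⟨i, hvi, fun j ↦ ⟨(v j / v i : ℚ), ?_⟩, fun _ ↦ rfl⟩
  have hle : ‖(v j : ℚ_[p])‖ ≤ ‖(v i : ℚ_[p])‖ := by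
    by_cases hj : v j = 0
    · rw [hj, Rat.cast_zero, norm_zero]
      exact norm_nonneg _
    · exact hmax j (hfin.mem_toFinset.2 hj)
  push_cast
  rw [norm_div]
  exact div_le_one_of_le₀ hle (norm_nonneg _)

variable {p}

theorem exists_mem_cycles_zmod_support_subset {α : Type*} [LinearOrder α] {V : Finset α} {k : ℕ}
    {v : Finset α → ℚ} (hv : v ∈ cycles ℚ V k) (hv0 : v ≠ 0) :
    ∃ u ∈ cycles (ZMod p) V k, u ≠ 0 ∧ u.support ⊆ v.support := by
  have hfin : v.support.Finite := (V.powersetCard k).finite_toSet.subset fun σ hσ ↦ by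
    by_contra h
    exact hσ (mem_chains.1 (mem_cycles.1 hv).1 σ h)
  obtain ⟨σ, hσ, w, hw⟩ := exists_padicInt_eq_div p hv0 hfin
  have hw_cycle : w ∈ cycles ℤ_[p] V k := by
    refine mem_cycles_of_comp_ringHom_mem_cycles (f := PadicInt.Coe.ringHom)
      Subtype.coe_injective ?_
    have hcoe : PadicInt.Coe.ringHom ∘ w = Rat.castHom ℚ_[p] ∘ ((v σ)⁻¹ • v) :=
      funext fun τ ↦ (hw τ).trans (by simp [div_eq_inv_mul])
    rw [hcoe]
    exact comp_ringHom_mem_cycles _ (Submodule.smul_mem _ _ hv)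
  have hwσ : w σ = 1 := Subtype.ext (by simp [hw, hσ])
  refine ⟨PadicInt.toZMod ∘ w, comp_ringHom_mem_cycles _ hw_cycle, fun h ↦ ?_, fun τ hτ hvτ ↦ hτ ?_⟩
  · simpa [hwσ] using congrFun h σ
  · have hwτ : w τ = 0 := Subtype.ext (by simp [hw, hvτ])
    simp [hwτ]

theorem simple_f2_cycle_in_simple_q_cycle_general {α : Type*} [LinearOrder α] {V : Finset α}
    (hV : V.Nonempty) {k : ℕ} {z : Finset α → ZMod p} (hz : IsElementary (cycles (ZMod p) V k) z) :
    ∃ w, IsElementary (cycles ℚ V k) w ∧ z.support ⊆ w.support :=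
  hz.exists_support_subset (by rw [finrank_cycles _ hV, finrank_cycles _ hV])
    fun _ ↦ exists_mem_cycles_zmod_support_subset

end Reduction

section SimpleCycles

lemma simplices_eq_powersetCard (V : Finset ℕ) (d : ℕ) :
    simplices V d = V.powersetCard (d + 1) := by
  ext σ
  simp only [simplices, mem_filter, mem_powerset, mem_powersetCard]

lemma isQChain_iff_mem_chains {n d : ℕ} {C : Finset ℕ → ℚ} :
    IsQChain n d C ↔ C ∈ chains ℚ (rng n) (d + 1) := by
  simp only [IsQChain, mem_chains, simplices_eq_powersetCard, not_imp_comm, ne_eq]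

lemma rbd_eq_boundary {n d : ℕ} {C : Finset ℕ → ℚ} (hC : IsQChain n d C) :
    rbd n d C = boundary ℚ (rng n) C := by
  ext τ
  have hcoface (σ : Finset ℕ) (v : ℕ) : v ∈ σ ∧ σ.erase v = τ ↔ v ∉ τ ∧ insert v τ = σ := by
    grind
  have hsign (v : ℕ) : #{x ∈ insert v τ | x < v} = #{x ∈ τ | x < v} := by
    rw [filter_insert, if_neg (lt_irrefl v)]
  calc rbd n d C τ
      = ∑ σ ∈ simplices (rng n) d, ∑ v ∈ rng n, if v ∈ σ ∧ σ.erase v = τ then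
          (-1) ^ #{x ∈ σ | x < v} * C σ else 0 := by
        refine sum_congr rfl fun σ hσ ↦ ?_
        have hσV : σ ⊆ rng n := mem_powerset.1 (mem_filter.1 hσ).1
        simp only [ite_and, ← sum_filter (· ∈ σ), filter_mem_eq_inter, inter_eq_right.2 hσV]
    _ = ∑ v ∈ rng n, if v ∉ τ then faceSign v τ • C (insert v τ) else 0 := by
        rw [sum_comm]
        refine sum_congr rfl fun v _ ↦ ?_
        simp only [hcoface, ite_and]
        split_ifs with hv
        · simp only [sum_const_zero]
        · rw [sum_ite_eq, hsign, faceSign, zsmul_eq_mul]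
          split_ifs with h
          · simp only [Int.cast_pow, Int.cast_neg, Int.cast_one]
          · rw [not_imp_comm.1 (hC _) h, mul_zero]
    _ = boundary ℚ (rng n) C τ := by
        rw [← sum_filter, boundary_apply, ← sdiff_eq_filter]

lemma isSimpleQCycle_iff_isElementary {n d : ℕ} {W : Finset ℕ → ℚ} :
    IsSimpleQCycle n d W ↔ IsElementary (cycles ℚ (rng n) (d + 1)) W := by
  have hcycle (C : Finset ℕ → ℚ) : IsQCycle n d C ↔ C ∈ cycles ℚ (rng n) (d + 1) := by
    rw [mem_cycles, ← isQChain_iff_mem_chains]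
    exact and_congr_right fun hC ↦ by rw [rbd_eq_boundary hC]
  simp only [IsSimpleQCycle, IsElementary, hcycle]

lemma mem_bd {X : Finset (Finset ℕ)} {τ : Finset ℕ} :
    τ ∈ bd X ↔ Odd #{σ ∈ X | τ ⊆ σ ∧ #τ + 1 = #σ} := by
  rw [bd, mem_filter, and_iff_right_iff_imp]
  intro hodd
  obtain ⟨σ, hσ⟩ := card_pos.1 hodd.pos
  obtain ⟨hσX, hτσ, -⟩ := mem_filter.1 hσ
  exact mem_biUnion.2 ⟨σ, hσX, mem_powerset.2 hτσ⟩

lemma boundary_indicator_apply {α : Type*} [LinearOrder α] {V : Finset α}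
    {X : Finset (Finset α)} (hX : ∀ σ ∈ X, σ ⊆ V) (τ : Finset α) :
    boundary (ZMod 2) V (Set.indicator X 1) τ = #{σ ∈ X | τ ⊆ σ ∧ #τ + 1 = #σ} := by
  have hsign (v : α) : (faceSign v τ : ZMod 2) = 1 := by
    rw [faceSign, Int.cast_pow, Int.cast_neg, Int.cast_one, ZMod.neg_eq_self_mod_two, one_pow]
  have hcofaces : {σ ∈ X | τ ⊆ σ ∧ #τ + 1 = #σ} =
      {v ∈ V \ τ | insert v τ ∈ X}.image (insert · τ) := by
    ext σ
    simp only [mem_filter, mem_image, mem_sdiff]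
    constructor
    · rintro ⟨hσ, hτσ⟩
      obtain ⟨v, hv, rfl⟩ := exists_eq_insert_iff.2 hτσ
      exact ⟨v, ⟨⟨hX _ hσ (mem_insert_self v τ), hv⟩, hσ⟩, rfl⟩
    · rintro ⟨v, ⟨⟨-, hv⟩, hvX⟩, rfl⟩
      exact ⟨hvX, exists_eq_insert_iff.1 ⟨v, hv, rfl⟩⟩
  have hinj : Set.InjOn (insert · τ) ({v ∈ V \ τ | insert v τ ∈ X} : Finset α) := by
    intro u hu v _ huv
    exact insert_inj_on τ (by simp_all) (by simp_all) huv
  rw [hcofaces, card_image_of_injOn hinj, card_filter, Nat.cast_sum, boundary_apply]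
  refine sum_congr rfl fun v _ ↦ ?_
  rw [zsmul_eq_mul, hsign, one_mul, Set.indicator_apply]
  simp

lemma bd_eq_empty_iff {V : Finset ℕ} {d : ℕ} {X : Finset (Finset ℕ)} (hX : X ⊆ simplices V d) :
    bd X = ∅ ↔ Set.indicator X 1 ∈ cycles (ZMod 2) V (d + 1) := by
  rw [simplices_eq_powersetCard] at hX
  have hchain : Set.indicator X 1 ∈ chains (ZMod 2) V (d + 1) :=
    mem_chains.2 fun σ hσ ↦ Set.indicator_of_notMem (fun h ↦ hσ (hX h)) _
  rw [mem_cycles, and_iff_right hchain, eq_empty_iff_forall_notMem, funext_iff]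
  refine forall_congr' fun τ ↦ ?_
  rw [mem_bd, boundary_indicator_apply (fun σ hσ ↦ (mem_powersetCard.1 (hX hσ)).1),
    Pi.zero_apply, ZMod.natCast_eq_zero_iff_even, Nat.not_odd_iff_even]

lemma IsSimpleCycle.isElementary_indicator {V : Finset ℕ} {d : ℕ} {Z : Finset (Finset ℕ)}
    (hZ : IsSimpleCycle Z) (hZV : Z ⊆ simplices V d) :
    IsElementary (cycles (ZMod 2) V (d + 1)) (Set.indicator Z 1) := by
  classical
  obtain ⟨hne, hbd, hmin⟩ := hZ
  have hsupp (X : Finset (Finset ℕ)) : (Set.indicator X 1 : Finset ℕ → ZMod 2).support = X := by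
    simp
  refine ⟨(bd_eq_empty_iff hZV).1 hbd, ?_, fun u hu huZ ↦ ?_⟩
  · rwa [← Function.support_nonempty_iff, hsupp, coe_nonempty, nonempty_iff_ne_empty]
  obtain ⟨Y, hY⟩ : ∃ Y : Finset (Finset ℕ), (Y : Set (Finset ℕ)) = u.support :=
    (Z.finite_toSet.subset ((hsupp Z) ▸ huZ.subset)).exists_finset_coe
  have huY : u = Set.indicator Y 1 := by
    ext σ
    rw [hY, Set.indicator_apply]
    split_ifs with h
    · exact Fin.eq_one_of_ne_zero _ h
    · exact Function.notMem_support.1 h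
  rw [hsupp, ← hY, coe_ssubset] at huZ
  have hbdY : bd Y = ∅ := (bd_eq_empty_iff (huZ.subset.trans hZV)).2 (huY ▸ hu)
  have hY0 : Y = ∅ := by
    by_contra h
    exact hmin Y huZ h hbdY
  rw [huY, hY0, coe_empty, Set.indicator_empty]
  rfl

end SimpleCycles

/-- Every simple `d`-cycle `Z` on `[n]` over `F_2` is contained in the support of some
simple rational `d`-cycle on `[n]`. -/
theorem simple_f2_cycle_in_simple_q_cycle (n d : ℕ) (Z : Finset (Finset ℕ))
    (hZ : Z ⊆ simplices (rng n) d) (hZsimple : IsSimpleCycle Z) :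
    ∃ W : Finset ℕ → ℚ, IsSimpleQCycle n d W ∧ ↑Z ⊆ Function.support W := by
  have hz := hZsimple.isElementary_indicator hZ
  obtain ⟨σ, hσ⟩ := nonempty_iff_ne_empty.2 hZsimple.1
  have hV : (rng n).Nonempty := by
    obtain ⟨hσV, hcard⟩ := mem_filter.1 (hZ hσ)
    exact (card_pos.1 (hcard ▸ d.succ_pos)).mono (mem_powerset.1 hσV)
  obtain ⟨W, hW, hZW⟩ := simple_f2_cycle_in_simple_q_cycle_general hV hz
  exact ⟨W, isSimpleQCycle_iff_isElementary.2 hW, by simpa using hZW⟩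
end

section
/- Let F be a set of d-simplices on [n] that is acyclic over F_2 (no nonempty subset of F has empty F_2-boundary). Then F is acyclic over Q: there is no nonzero rational d-cycle whose support is contained in F. -/
open Finset symmDiff

/-!
If the rows of a matrix over a field are linearly independent, some maximal minor is nonzero, and a
minor that is nonzero modulo `2` is nonzero in `ℤ`, hence in `ℚ`. Modulo `2` the signed incidence
matrix of simplices against their faces is the matrix of the `F_2`-boundary, so rows of it that are
independent over `F_2` are independent over `ℚ`.
-/

section LinearIndependence

theorem exists_det_submatrix_ne_zero {m n k : Type*} [Fintype m] [DecidableEq m] [Field k]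
    {A : Matrix m n k} (hA : LinearIndependent k A.row) :
    ∃ e : m → n, (A.submatrix id e).det ≠ 0 := by
  obtain ⟨κ, c, -, hspan, hindep⟩ := exists_linearIndependent' k A.col
  have hcol : Submodule.span k (Set.range A.col) = ⊤ :=
    span_flip_eq_top_iff_linearIndependent.mpr hA
  let b := Module.Basis.mk hindep (hspan.trans hcol).ge
  let f : m ≃ κ := (Pi.basisFun k m).indexEquiv b
  refine ⟨c ∘ f, ((Matrix.isUnit_iff_isUnit_det _).mp ?_).ne_zero⟩
  exact Matrix.linearIndependent_cols_iff_isUnit.mp (hindep.comp f f.injective)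

theorem linearIndependent_map_of_ker_le {ι κ R k K : Type*} [CommRing R] [Field k] [CommRing K]
    [IsDomain K] {φ : R →+* k} {ψ : R →+* K} (hker : RingHom.ker ψ ≤ RingHom.ker φ)
    {v : ι → κ → R} (hv : LinearIndependent k fun i j => φ (v i j)) :
    LinearIndependent K fun i j => ψ (v i j) := by
  classical
  refine linearIndependent_iff_finset_linearIndependent.mpr fun s => ?_
  obtain ⟨e, he⟩ := exists_det_submatrix_ne_zero (A := .of fun (i : s) j => φ (v i j))
    (hv.comp _ Subtype.val_injective)
  let M : Matrix s s R := .of fun i j => v i (e j)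
  have hφ : φ M.det ≠ 0 := by rwa [RingHom.map_det]
  have hψ : (ψ.mapMatrix M).det ≠ 0 := by
    rw [← RingHom.map_det]
    exact fun h => hφ (hker h)
  exact .of_comp (LinearMap.funLeft K K e) (Matrix.linearIndependent_rows_of_det_ne_zero hψ)

end LinearIndependence

theorem covBy_iff_subset_and_card_add_one {α : Type*} {s t : Finset α} :
    s ⋖ t ↔ s ⊆ t ∧ #s + 1 = #t := by
  classical
  rw [covBy_iff_card_sdiff_eq_one]
  refine and_congr_right fun h => ?_
  have := card_sdiff_add_card_eq_card h
  lia

section Incidence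

variable {α : Type*} [LinearOrder α]

/-- The incidence number `[σ : τ]`: the coefficient of `τ` in the boundary of the oriented simplex
`σ`, so `(-1) ^ i` if `τ` is `σ` without its `i`-th vertex (counted from `0`), and `0` if `τ` is not
a codimension-one face of `σ`. -/
def incidence (σ τ : Finset α) : ℤ :=
  ∑ v ∈ σ, if σ.erase v = τ then (-1) ^ #{u ∈ σ | u < v} else 0

theorem incidence_erase {σ : Finset α} {v : α} (hv : v ∈ σ) :
    incidence σ (σ.erase v) = (-1) ^ #{u ∈ σ | u < v} := by
  rw [incidence, sum_eq_single_of_mem v hv, if_pos rfl]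
  exact fun w hw hwv => if_neg fun h => hwv (erase_injOn σ hw hv h)

theorem incidence_eq_zero_of_not_covBy {σ τ : Finset α} (h : ¬τ ⋖ σ) : incidence σ τ = 0 :=
  sum_eq_zero fun v hv => if_neg fun hτ : σ.erase v = τ => h (hτ ▸ erase_covBy hv)

theorem intCast_incidence_zmod_two (σ τ : Finset α) :
    (incidence σ τ : ZMod 2) = if τ ⊆ σ ∧ #τ + 1 = #σ then 1 else 0 := by
  split_ifs with h <;> rw [← covBy_iff_subset_and_card_add_one] at h
  · obtain ⟨v, hv, rfl⟩ := covBy_iff_exists_erase.mp h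
    simp [incidence_erase hv]
  · simp [incidence_eq_zero_of_not_covBy h]

end Incidence

theorem mem_bd_iff_sum_incidence_ne_zero {X : Finset (Finset ℕ)} {τ : Finset ℕ} :
    τ ∈ bd X ↔ ∑ σ ∈ X, (incidence σ τ : ZMod 2) ≠ 0 := by
  simp only [intCast_incidence_zmod_two, sum_boole, ZMod.natCast_ne_zero_iff_odd, bd, mem_filter,
    mem_biUnion, mem_powerset, and_iff_right_iff_imp]
  intro hodd
  obtain ⟨σ, hσ⟩ := card_pos.mp hodd.pos
  exact ⟨σ, (mem_filter.mp hσ).1, (mem_filter.mp hσ).2.1⟩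

theorem IsAcyclic.linearIndepOn_incidence {F : Finset (Finset ℕ)} (hF : IsAcyclic F) :
    LinearIndepOn (ZMod 2) (fun σ τ => (incidence σ τ : ZMod 2)) (F : Set (Finset ℕ)) := by
  refine linearIndepOn_finset_iff.mpr fun g hg => ?_
  have hone : ∀ a : ZMod 2, a ≠ 0 → a = 1 := by decide
  have hbd : bd {σ ∈ F | g σ ≠ 0} = ∅ := by
    refine eq_empty_of_forall_notMem fun τ hτ => mem_bd_iff_sum_incidence_ne_zero.mp hτ ?_
    calc ∑ σ ∈ F with g σ ≠ 0, (incidence σ τ : ZMod 2)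
        = ∑ σ ∈ F with g σ ≠ 0, g σ * incidence σ τ :=
          sum_congr rfl fun σ hσ => by rw [hone (g σ) (mem_filter.mp hσ).2, one_mul]
      _ = ∑ σ ∈ F, g σ * incidence σ τ :=
          sum_filter_of_ne fun σ _ h => left_ne_zero_of_mul h
      _ = 0 := by simpa using congrFun hg τ
  have hsupp : {σ ∈ F | g σ ≠ 0} = ∅ := by
    by_contra h
    exact hF _ (filter_subset _ _) h hbd
  simpa [filter_eq_empty_iff] using hsupp

theorem rbd_eq_sum_smul_incidence {n d : ℕ} {F : Finset (Finset ℕ)} {C : Finset ℕ → ℚ}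
    (hF : F ⊆ simplices (rng n) d) (hC : ∀ σ, C σ ≠ 0 → σ ∈ F) :
    rbd n d C = ∑ σ ∈ F, C σ • fun τ => (incidence σ τ : ℚ) := by
  ext τ
  calc rbd n d C τ
      = ∑ σ ∈ simplices (rng n) d, C σ * incidence σ τ := by
        simp [rbd, incidence, mul_sum, mul_comm]
    _ = ∑ σ ∈ F, C σ * incidence σ τ :=
        (sum_subset hF fun σ _ hσ => by rw [not_imp_comm.mp (hC σ) hσ, zero_mul]).symm
    _ = (∑ σ ∈ F, C σ • fun τ => (incidence σ τ : ℚ)) τ := by simp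

/-- A set `F` of `d`-simplices on `[n]` that is acyclic over `F_2` is acyclic over `ℚ`:
no nonzero rational `d`-cycle has support contained in `F`. -/
theorem f2_acyclic_implies_q_acyclic (n d : ℕ) (F : Finset (Finset ℕ))
    (hF : F ⊆ simplices (rng n) d) (hacy : IsAcyclic F) :
    ∀ W : Finset ℕ → ℚ, (∀ σ, W σ ≠ 0 → σ ∈ F) → rbd n d W = 0 → W = 0 := by
  intro W hW hcycle
  have hindep : LinearIndepOn ℚ (fun σ τ => (incidence σ τ : ℚ)) (F : Set (Finset ℕ)) :=
    linearIndependent_map_of_ker_le (φ := Int.castRingHom (ZMod 2)) (ψ := Int.castRingHom ℚ)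
      (((RingHom.injective_iff_ker_eq_bot _).mp Int.cast_injective).trans_le bot_le)
      hacy.linearIndepOn_incidence
  rw [rbd_eq_sum_smul_incidence hF hW] at hcycle
  ext σ
  by_contra hσ
  exact hσ (linearIndepOn_finset_iff.mp hindep W hcycle σ (hW σ hσ))
end
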